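/- (Chan's identity) For every complex number q with 0 < |q| < 1, 1/((q; q)_∞ (q^2; q^2)_∞) = (q^9; q^9)_∞^3 (q^{18}; q^{18})_∞^3 / ((q^3; q^3)_∞^4 (q^6; q^6)_∞^4) · { (1/x(q^3)^2 − 2 q^3 x(q^3)) + q (1/x(q^3) + 4 q^3 x(q^3)^2) + 3 q^2 }, where x(q) = (q; q^2)_∞ / (q^3; q^6)_∞^3. -/

import Mathlib

/-- The q-shifted factorial `(a; q)_∞ = ∏_{n=0}^∞ (1 - a qⁿ)`. -/
noncomputable def qPoch (a q : ℂ) : ℂ := ∏' n : ℕ, (1 - a * q ^ n)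

/-- `x(q) = (q; q²)_∞ / (q³; q⁶)_∞³`. -/
noncomputable def x (q : ℂ) : ℂ := qPoch q (q ^ 2) / qPoch (q ^ 3) (q ^ 6) ^ 3

/-!
Write `E_k = (q ^ k; q ^ k)_∞` and `X = x (q ^ 3)`. The theta functions
`E_1 ^ 2 / E_2 = ∑ (-1) ^ n * q ^ (n ^ 2)` and `E_2 ^ 2 / E_1 = ∑ q ^ (n (n + 1) / 2)` (sum over
`n ≥ 0`) can be split by the residue of `n` modulo `3`. Each piece is again a theta function, hence
a product by the Jacobi triple product, and multiplying the two dissections gives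
`E_1 * E_2 = E_9 * E_18 * (1 / X - q - 2 * q ^ 2 * X)`.

Here `E_9`, `E_18` and `X` depend only on `q ^ 3`, so replacing `q` by `ω * q` for the cube roots of
unity `ω` and multiplying gives the norm identity
`E_3 ^ 4 * E_6 ^ 4 = (E_9 * E_18) ^ 4 * (1 / X ^ 3 - 7 * q ^ 3 - 8 * q ^ 6 * X ^ 3)`. Dividing it by
the dissection leaves as cofactor the product of the other two conjugates, which is the bracket in
Chan's identity.
-/

open Filter Finset Topology

/-- Euler's product `(q; q)_∞`. -/
local notation "E(" q ")" => qPoch q q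

section QPochhammer

variable {a q : ℂ}

lemma norm_pow_lt_one {R : Type*} [NormedDivisionRing R] {q : R} (hq : ‖q‖ < 1) {m : ℕ}
    (hm : m ≠ 0) : ‖q ^ m‖ < 1 := by
  simpa using pow_lt_one₀ (norm_nonneg q) hq hm

lemma hasSum_norm_neg_mul_pow (a : ℂ) (hq : ‖q‖ < 1) :
    HasSum (fun n : ℕ ↦ ‖-(a * q ^ n)‖) (‖a‖ / (1 - ‖q‖)) := by
  simpa [div_eq_mul_inv] using (hasSum_geometric_of_lt_one (norm_nonneg q) hq).mul_left ‖a‖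

lemma multipliable_one_sub_mul_pow (a : ℂ) (hq : ‖q‖ < 1) :
    Multipliable fun n : ℕ ↦ 1 - a * q ^ n := by
  simpa only [sub_eq_add_neg] using
    multipliable_one_add_of_summable (hasSum_norm_neg_mul_pow a hq).summable

lemma tendsto_prod_range_qPoch (a : ℂ) (hq : ‖q‖ < 1) :
    Tendsto (fun N ↦ ∏ n ∈ range N, (1 - a * q ^ n)) atTop (𝓝 (qPoch a q)) :=
  (multipliable_one_sub_mul_pow a hq).tendsto_prod_tprod_nat

lemma qPoch_ne_zero (ha : ‖a‖ < 1) (hq : ‖q‖ < 1) : qPoch a q ≠ 0 := by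
  have h := tprod_one_add_ne_zero_of_summable (f := fun n : ℕ ↦ -(a * q ^ n)) (fun n h ↦ ?_)
    (hasSum_norm_neg_mul_pow a hq).summable
  · simpa only [qPoch, sub_eq_add_neg] using h
  · have hlt : ‖a * q ^ n‖ < 1 := by
      rw [norm_mul, norm_pow]
      exact mul_lt_one_of_nonneg_of_lt_one_left (norm_nonneg a) ha
        (pow_le_one₀ (norm_nonneg q) hq.le)
    rw [show a * q ^ n = 1 by linear_combination -h, norm_one] at hlt
    exact lt_irrefl 1 hlt

lemma qPoch_self_ne_zero (hq : ‖q‖ < 1) : E(q) ≠ 0 := qPoch_ne_zero hq hq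

lemma qPoch_pow_self_ne_zero (hq : ‖q‖ < 1) {m : ℕ} (hm : m ≠ 0) : E(q ^ m) ≠ 0 :=
  qPoch_self_ne_zero (norm_pow_lt_one hq hm)

lemma qPoch_eq_one_sub_mul_qPoch (a : ℂ) (hq : ‖q‖ < 1) :
    qPoch a q = (1 - a) * qPoch (a * q) q := by
  have h : ∀ n : ℕ, 1 - a * q ^ (n + 1) = 1 - a * q * q ^ n := fun n ↦ by ring
  rw [qPoch, tprod_eq_zero_mul' (by simpa only [h] using multipliable_one_sub_mul_pow (a * q) hq)]
  simp only [h, pow_zero, mul_one, qPoch]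

lemma norm_qPoch_sub_one_le (a : ℂ) (hq : ‖q‖ < 1) :
    ‖qPoch a q - 1‖ ≤ Real.exp (‖a‖ / (1 - ‖q‖)) - 1 := by
  refine le_of_tendsto ((tendsto_prod_range_qPoch a hq).sub_const 1).norm (.of_forall fun N ↦ ?_)
  have hsum := sum_le_hasSum (range N) (fun _ _ ↦ norm_nonneg _) (hasSum_norm_neg_mul_pow a hq)
  calc ‖∏ n ∈ range N, (1 - a * q ^ n) - 1‖
      ≤ Real.exp (∑ n ∈ range N, ‖-(a * q ^ n)‖) - 1 := by
        simpa only [sub_eq_add_neg] using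
          (range N).norm_prod_one_add_sub_one_le fun n ↦ -(a * q ^ n)
    _ ≤ Real.exp (‖a‖ / (1 - ‖q‖)) - 1 := by gcongr

lemma tendsto_qPoch_nhds_zero (hq : ‖q‖ < 1) : Tendsto (qPoch · q) (𝓝 0) (𝓝 1) := by
  rw [tendsto_iff_norm_sub_tendsto_zero]
  refine squeeze_zero (fun _ ↦ norm_nonneg _) (norm_qPoch_sub_one_le · hq) ?_
  have hcont : Continuous fun a : ℂ ↦ Real.exp (‖a‖ / (1 - ‖q‖)) - 1 := by fun_prop
  simpa using hcont.tendsto 0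

lemma qPoch_eq_prod_qPoch_pow (a : ℂ) (hq : ‖q‖ < 1) (m : ℕ) [NeZero m] :
    qPoch a q = ∏ r ∈ range m, qPoch (a * q ^ r) (q ^ m) := by
  have hqm := norm_pow_lt_one hq (NeZero.ne m)
  have hmul := (Nat.divModEquiv m).symm.multipliable_iff.mpr (multipliable_one_sub_mul_pow a hq)
  calc qPoch a q = ∏' n : ℕ, ∏ r : Fin m, (1 - a * q ^ (n * m + r)) := by
        rw [qPoch, ← (Nat.divModEquiv m).symm.tprod_eq]
        exact (hmul.tprod_prod' fun _ ↦ (hasProd_fintype _).multipliable).trans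
          (tprod_congr fun n ↦ tprod_fintype _)
    _ = ∏' n : ℕ, ∏ r ∈ range m, (1 - a * q ^ r * (q ^ m) ^ n) :=
        tprod_congr fun n ↦ by
          rw [prod_range]
          exact prod_congr rfl fun r _ ↦ by ring
    _ = ∏ r ∈ range m, qPoch (a * q ^ r) (q ^ m) :=
        Multipliable.tprod_finsetProd fun r _ ↦ multipliable_one_sub_mul_pow _ hqm

lemma qPoch_self_eq_prod_qPoch_pow (hq : ‖q‖ < 1) (m : ℕ) [NeZero m] :
    E(q) = ∏ r ∈ range m, qPoch (q ^ (r + 1)) (q ^ m) := by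
  simpa only [pow_succ'] using qPoch_eq_prod_qPoch_pow q hq m

lemma prod_one_sub_rootOfUnity_pow_mul {R : Type*} [CommRing R] [IsDomain R] {ζ : R} {m : ℕ}
    (hζ : IsPrimitiveRoot ζ m) (hm : 0 < m) (y : R) :
    ∏ r ∈ range m, (1 - ζ ^ r * y) = 1 - y ^ m := by
  simpa [Polynomial.eval_prod] using
    (congrArg (Polynomial.eval 1) (X_pow_sub_C_eq_prod hζ hm (Eq.refl (y ^ m)))).symm

lemma prod_qPoch_rootOfUnity_mul {ζ : ℂ} {m : ℕ} (hζ : IsPrimitiveRoot ζ m) (hm : 0 < m) (a : ℂ)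
    (hq : ‖q‖ < 1) : ∏ r ∈ range m, qPoch (ζ ^ r * a) q = qPoch (a ^ m) (q ^ m) := by
  simp only [qPoch]
  rw [← Multipliable.tprod_finsetProd fun r _ ↦ multipliable_one_sub_mul_pow (ζ ^ r * a) hq]
  refine tprod_congr fun n ↦ ?_
  simp only [mul_assoc]
  rw [prod_one_sub_rootOfUnity_pow_mul hζ hm, mul_pow, pow_right_comm]

lemma qPoch_sq_mul_qPoch_sq_self (hq : ‖q‖ < 1) : qPoch q (q ^ 2) * E(q ^ 2) = E(q) := by
  simp [qPoch_self_eq_prod_qPoch_pow hq 2, prod_range_succ]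

lemma qPoch_self_mul_qPoch_neg_self (hq : ‖q‖ < 1) : E(q) * qPoch (-q) q = E(q ^ 2) := by
  simpa [prod_range_succ] using
    prod_qPoch_rootOfUnity_mul (IsPrimitiveRoot.neg_one 0 (by norm_num)) two_pos q hq

lemma prod_qPoch_self_rootOfUnity_mul {ζ : ℂ} {ℓ : ℕ} (hℓ : ℓ.Prime) (hζ : IsPrimitiveRoot ζ ℓ)
    (hq : ‖q‖ < 1) :
    (∏ r ∈ range ℓ, E(ζ ^ r * q)) * E(q ^ ℓ ^ 2) = E(q ^ ℓ) ^ (ℓ + 1) := by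
  have : NeZero ℓ := ⟨hℓ.ne_zero⟩
  have hqℓ := norm_pow_lt_one hq hℓ.ne_zero
  have hζr (r : ℕ) : (ζ ^ r) ^ ℓ = 1 := by rw [pow_right_comm, hζ.pow_eq_one, one_pow]
  have hconj (r : ℕ) : E(ζ ^ r * q) =
      ∏ s ∈ range ℓ, qPoch ((ζ ^ r * q) ^ (s + 1)) (q ^ ℓ) := by
    have hnorm : ‖ζ ^ r * q‖ < 1 := by simpa [hζ.norm'_eq_one hℓ.ne_zero] using hq
    simpa only [mul_pow _ q ℓ, hζr, one_mul] using qPoch_self_eq_prod_qPoch_pow hnorm ℓ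
  have hcoprime (s : ℕ) (hs : s ∈ range (ℓ - 1)) :
      ∏ r ∈ range ℓ, qPoch ((ζ ^ r * q) ^ (s + 1)) (q ^ ℓ) =
        qPoch ((q ^ ℓ) ^ (s + 1)) (q ^ ℓ ^ 2) := by
    have hlt : s + 1 < ℓ := by have := mem_range.mp hs; omega
    have hroot := hζ.pow_of_coprime (s + 1) (Nat.coprime_of_lt_prime s.succ_ne_zero hlt hℓ).symm
    simp only [mul_pow _ q, pow_right_comm ζ _ (s + 1)]
    rw [prod_qPoch_rootOfUnity_mul hroot hℓ.pos _ hqℓ, ← pow_mul q ℓ ℓ, ← sq, pow_right_comm]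
  have hmultiple : ∏ r ∈ range ℓ, qPoch ((ζ ^ r * q) ^ ℓ) (q ^ ℓ) = E(q ^ ℓ) ^ ℓ := by
    simp [mul_pow, hζr]
  have hE := qPoch_self_eq_prod_qPoch_pow hqℓ ℓ
  have hsplit (f : ℕ → ℂ) : ∏ s ∈ range ℓ, f (s + 1) = (∏ s ∈ range (ℓ - 1), f (s + 1)) * f ℓ := by
    rw [← Nat.sub_add_cancel hℓ.one_le, prod_range_succ, Nat.add_sub_cancel]
  rw [hsplit fun s ↦ qPoch ((q ^ ℓ) ^ s) ((q ^ ℓ) ^ ℓ), ← pow_mul, ← sq] at hE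
  rw [prod_congr rfl fun r _ ↦ hconj r, Finset.prod_comm,
    hsplit fun s ↦ ∏ r ∈ range ℓ, qPoch ((ζ ^ r * q) ^ s) (q ^ ℓ), prod_congr rfl hcoprime,
    hmultiple, mul_right_comm, ← hE, ← pow_succ']

end QPochhammer

section RamanujanTheta

/-- The triangular number `n (n + 1) / 2`, extended to the integers. -/
def triangular (n : ℤ) : ℤ := n * (n + 1) / 2

lemma two_mul_triangular (n : ℤ) : 2 * triangular n = n * (n + 1) :=
  Int.mul_ediv_cancel' (Int.even_mul_succ_self n).two_dvd

lemma triangular_add_one (n : ℤ) : triangular (n + 1) = triangular n + (n + 1) := by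
  linarith [two_mul_triangular n, two_mul_triangular (n + 1)]

lemma triangular_neg (n : ℤ) : triangular (-n) = triangular n - n := by
  linarith [two_mul_triangular n, two_mul_triangular (-n)]

lemma triangular_three_mul (n : ℤ) :
    triangular (3 * n) = 6 * triangular n + 3 * triangular (-n) := by
  linarith [two_mul_triangular n, two_mul_triangular (-n), two_mul_triangular (3 * n)]

/-- The general term `a ^ (n (n + 1) / 2) * b ^ (n (n - 1) / 2)` of Ramanujan's theta series. -/
noncomputable def thetaTerm (a b : ℂ) (n : ℤ) : ℂ := a ^ triangular n * b ^ triangular (-n)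

/-- Ramanujan's general theta function
`f(a, b) = ∑ a ^ (n (n + 1) / 2) * b ^ (n (n - 1) / 2)`, summed over all integers `n`. -/
noncomputable def ramanujanTheta (a b : ℂ) : ℂ := ∑' n : ℤ, thetaTerm a b n

variable {a b : ℂ}

lemma thetaTerm_neg (a b : ℂ) (n : ℤ) : thetaTerm a b (-n) = thetaTerm b a n := by
  rw [thetaTerm, neg_neg, mul_comm, thetaTerm]

lemma thetaTerm_ne_zero (ha : a ≠ 0) (hb : b ≠ 0) (n : ℤ) : thetaTerm a b n ≠ 0 :=
  mul_ne_zero (zpow_ne_zero _ ha) (zpow_ne_zero _ hb)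

lemma thetaTerm_add_one (ha : a ≠ 0) (hb : b ≠ 0) (n : ℤ) :
    thetaTerm a b (n + 1) = thetaTerm a b n * (a * (a * b) ^ n) := by
  have hneg : triangular (-(n + 1)) = triangular (-n) + n := by
    rw [triangular_neg, triangular_neg, triangular_add_one]; ring
  rw [thetaTerm, hneg, triangular_add_one, zpow_add₀ ha, zpow_add_one₀ ha, zpow_add₀ hb, mul_zpow,
    thetaTerm]
  ring

lemma summable_thetaTerm_natCast (ha : a ≠ 0) (hb : b ≠ 0) (hab : ‖a * b‖ < 1) :
    Summable fun n : ℕ ↦ thetaTerm a b n := by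
  refine summable_of_ratio_test_tendsto_lt_one one_pos
    (.of_forall fun n ↦ thetaTerm_ne_zero ha hb n) ?_
  have hratio (n : ℕ) :
      ‖thetaTerm a b (n + 1 : ℕ)‖ / ‖thetaTerm a b n‖ = ‖a‖ * ‖a * b‖ ^ n := by
    rw [Nat.cast_succ, thetaTerm_add_one ha hb, norm_mul,
      mul_div_cancel_left₀ _ (norm_ne_zero_iff.mpr (thetaTerm_ne_zero ha hb n)), norm_mul,
      zpow_natCast, norm_pow]
  simpa only [hratio, mul_zero] using
    (tendsto_pow_atTop_nhds_zero_of_lt_one (norm_nonneg _) hab).const_mul ‖a‖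

lemma summable_thetaTerm (ha : a ≠ 0) (hb : b ≠ 0) (hab : ‖a * b‖ < 1) :
    Summable (thetaTerm a b) := by
  refine .of_nat_of_neg (summable_thetaTerm_natCast ha hb hab) ?_
  simpa only [thetaTerm_neg] using summable_thetaTerm_natCast hb ha (by rwa [mul_comm])

end RamanujanTheta

section JacobiTripleProduct

variable {a b q : ℂ}

/-- The tail `(q ^ (k + 1); q)_∞` of Euler's product. It vanishes for `k < 0`, so that
`qTail q k / (q; q)_∞` is `1 / (q; q)_k` extended by zero to all integers `k`. -/
noncomputable def qTail (q : ℂ) (k : ℤ) : ℂ := qPoch (q ^ (k + 1)) q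

lemma qTail_zero (q : ℂ) : qTail q 0 = E(q) := by simp [qTail]

lemma qTail_eq_one_sub_mul (hq₀ : q ≠ 0) (hq : ‖q‖ < 1) (k : ℤ) :
    qTail q k = (1 - q ^ (k + 1)) * qTail q (k + 1) := by
  rw [qTail, qPoch_eq_one_sub_mul_qPoch _ hq, qTail, zpow_add_one₀ hq₀ (k + 1)]

lemma qTail_of_neg (hq₀ : q ≠ 0) {k : ℤ} (hk : k < 0) : qTail q k = 0 := by
  obtain ⟨n, rfl⟩ : ∃ n : ℕ, k = -(n + 1) := ⟨(-k - 1).toNat, by omega⟩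
  refine tprod_of_exists_eq_zero ⟨n, ?_⟩
  rw [← zpow_natCast q n, ← zpow_add₀ hq₀]
  simp

lemma tendsto_qTail_atTop (hq : ‖q‖ < 1) (n : ℤ) :
    Tendsto (fun N : ℕ ↦ qTail q (N + n)) atTop (𝓝 1) := by
  refine (tendsto_qPoch_nhds_zero hq).comp ?_
  rw [← tendsto_add_atTop_iff_nat (-(n + 1)).toNat]
  have hexp (N : ℕ) : (N + (-(n + 1)).toNat : ℕ) + n + 1 = ((N + (n + 1).toNat : ℕ) : ℤ) := by
    omega
  simp only [hexp, zpow_natCast]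
  exact (tendsto_add_atTop_iff_nat _).mpr (tendsto_pow_atTop_nhds_zero_of_norm_lt_one hq)

lemma exists_norm_qTail_le (hq₀ : q ≠ 0) (hq : ‖q‖ < 1) : ∃ C, ∀ k, ‖qTail q k‖ ≤ C := by
  obtain ⟨C, hC⟩ := (tendsto_qTail_atTop hq 0).norm.bddAbove_range
  refine ⟨C, fun k ↦ ?_⟩
  have hnat (n : ℕ) : ‖qTail q n‖ ≤ C := hC ⟨n, by simp⟩
  rcases lt_or_ge k 0 with hk | hk
  · simpa [qTail_of_neg hq₀ hk] using (norm_nonneg _).trans (hnat 0)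
  · lift k to ℕ using hk
    exact hnat k

/-- The general term of the finite Jacobi triple product, cleared of denominators: divided by
`(q; q)_∞ ^ 2`, where `q = a * b`, it is `thetaTerm a b n / ((q; q)_{M - n} * (q; q)_{N + n})`. -/
noncomputable def finiteTripleTerm (a b : ℂ) (M N : ℕ) (n : ℤ) : ℂ :=
  qTail (a * b) (M - n) * qTail (a * b) (N + n) * thetaTerm a b n

lemma hasSum_finiteTripleTerm_zero (ha : a ≠ 0) (hb : b ≠ 0) :
    HasSum (finiteTripleTerm a b 0 0) (E(a * b) * E(a * b)) := by
  have hab := mul_ne_zero ha hb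
  convert hasSum_single (0 : ℤ) fun n hn ↦ ?_ using 1
  · simp [finiteTripleTerm, qTail_zero, thetaTerm, triangular]
  · rcases lt_or_gt_of_ne hn with hneg | hpos
    · simp [finiteTripleTerm, qTail_of_neg hab hneg]
    · simp [finiteTripleTerm, qTail_of_neg hab (neg_neg_of_pos hpos)]

lemma hasSum_finiteTripleTerm_swap {M N : ℕ} {S : ℂ} :
    HasSum (finiteTripleTerm a b M N) S ↔ HasSum (finiteTripleTerm b a N M) S := by
  rw [← (Equiv.neg ℤ).hasSum_iff]
  refine iff_of_eq (congrArg (HasSum · S) (funext fun n ↦ ?_))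
  simp only [Function.comp_apply, Equiv.neg_apply, finiteTripleTerm, thetaTerm_neg,
    sub_neg_eq_add, ← sub_eq_add_neg, mul_comm b a]
  ring

/- The `q`-Pascal recurrence, cleared of denominators. -/
lemma one_sub_mul_finiteTripleTerm_succ (ha : a ≠ 0) (hb : b ≠ 0) (hab : ‖a * b‖ < 1) (M N : ℕ)
    (n : ℤ) :
    (1 - (a * b) ^ (M + N + 1)) * finiteTripleTerm a b M (N + 1) n =
      finiteTripleTerm a b M N n + b * (a * b) ^ N * finiteTripleTerm a b M N (n + 1) := by
  have hq₀ := mul_ne_zero ha hb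
  have hN := qTail_eq_one_sub_mul hq₀ hab (N + n)
  have hM := qTail_eq_one_sub_mul hq₀ hab (M - (n + 1))
  rw [show (M : ℤ) - (n + 1) + 1 = M - n by ring] at hM
  have hpow₁ : (a * b) ^ ((N : ℤ) + n + 1) = (a * b) ^ N * (a * b) ^ n * (a * b) := by
    rw [zpow_add_one₀ hq₀, zpow_add₀ hq₀, zpow_natCast]
  have hpow₂ : (a * b) ^ ((M : ℤ) - n) * (a * b) ^ n = (a * b) ^ M := by
    rw [← zpow_add₀ hq₀, sub_add_cancel, zpow_natCast]
  simp only [finiteTripleTerm, thetaTerm_add_one ha hb, hN, hM, hpow₁, Nat.cast_succ,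
    show (N : ℤ) + 1 + n = N + n + 1 by ring, show (N : ℤ) + (n + 1) = N + n + 1 by ring]
  linear_combination (a * b) ^ N * (a * b) * qTail (a * b) (M - n) *
    qTail (a * b) (N + n + 1) * thetaTerm a b n * hpow₂

lemma hasSum_finiteTripleTerm_succ (ha : a ≠ 0) (hb : b ≠ 0) (hab : ‖a * b‖ < 1) {M N : ℕ}
    {S : ℂ} (h : HasSum (finiteTripleTerm a b M N) (E(a * b) * qTail (a * b) (M + N) * S)) :
    HasSum (finiteTripleTerm a b M (N + 1))
      (E(a * b) * qTail (a * b) (M + N + 1) * (S * (1 + b * (a * b) ^ N))) := by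
  have hne : 1 - (a * b) ^ (M + N + 1) ≠ 0 := by
    intro h0
    have hlt := norm_pow_lt_one hab (M + N).succ_ne_zero
    rw [← sub_eq_zero.mp h0, norm_one] at hlt
    exact lt_irrefl 1 hlt
  have hsum := h.add (((Equiv.addRight 1).hasSum_iff.mpr h).mul_left (b * (a * b) ^ N))
  simp only [Function.comp_apply, Equiv.coe_addRight,
    ← one_sub_mul_finiteTripleTerm_succ ha hb hab] at hsum
  have htail := qTail_eq_one_sub_mul (mul_ne_zero ha hb) hab (M + N)
  rw [show (a * b) ^ ((M : ℤ) + N + 1) = (a * b) ^ (M + N + 1) by norm_cast] at htail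
  refine (hasSum_mul_left_iff hne).mp ((congrArg (HasSum _) ?_).mp hsum)
  rw [htail]
  ring

lemma hasSum_finiteTripleTerm (ha : a ≠ 0) (hb : b ≠ 0) (hab : ‖a * b‖ < 1) (M N : ℕ) :
    HasSum (finiteTripleTerm a b M N) (E(a * b) * qTail (a * b) (M + N) *
      ((∏ k ∈ range M, (1 + a * (a * b) ^ k)) * ∏ k ∈ range N, (1 + b * (a * b) ^ k))) := by
  induction M with
  | zero =>
    induction N with
    | zero => simpa [qTail_zero] using hasSum_finiteTripleTerm_zero ha hb
    | succ N ih =>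
      simpa [prod_range_succ, ← mul_assoc] using hasSum_finiteTripleTerm_succ ha hb hab ih
  | succ M ih =>
    rw [hasSum_finiteTripleTerm_swap] at ih ⊢
    rw [mul_comm a b] at ih hab ⊢
    rw [add_comm (M : ℤ), mul_comm (∏ k ∈ range M, _)] at ih
    convert hasSum_finiteTripleTerm_succ hb ha hab ih using 2
    · push_cast; ring_nf
    · rw [prod_range_succ]; ring

theorem jacobi_tripleProduct (ha : a ≠ 0) (hb : b ≠ 0) (hab : a * b = q) (hq : ‖q‖ < 1) :
    ramanujanTheta a b = qPoch (-a) q * qPoch (-b) q * E(q) := by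
  subst hab
  obtain ⟨C, hC⟩ := exists_norm_qTail_le (mul_ne_zero ha hb) hq
  have hterm (n : ℤ) :
      Tendsto (fun N : ℕ ↦ finiteTripleTerm a b N N n) atTop (𝓝 (thetaTerm a b n)) := by
    simpa [finiteTripleTerm, sub_eq_add_neg] using ((tendsto_qTail_atTop hq (-n)).mul
      (tendsto_qTail_atTop hq n)).mul_const (thetaTerm a b n)
  have hbound (N : ℕ) (n : ℤ) : ‖finiteTripleTerm a b N N n‖ ≤ C * C * ‖thetaTerm a b n‖ := by
    rw [finiteTripleTerm, norm_mul, norm_mul]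
    gcongr
    · exact (norm_nonneg _).trans (hC 0)
    · exact hC _
    · exact hC _
  have hsum : Tendsto (fun N : ℕ ↦ ∑' n, finiteTripleTerm a b N N n) atTop
      (𝓝 (ramanujanTheta a b)) :=
    tendsto_tsum_of_dominated_convergence ((summable_thetaTerm ha hb hq).norm.mul_left (C * C))
      hterm (.of_forall hbound)
  have htail : Tendsto (fun N : ℕ ↦ qTail (a * b) (N + N)) atTop (𝓝 1) := by
    simpa [Function.comp_def] using
      (tendsto_qTail_atTop hq 0).comp (tendsto_id.atTop_add_atTop tendsto_id)
  have hprod := (htail.const_mul E(a * b)).mul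
    ((tendsto_prod_range_qPoch (-a) hq).mul (tendsto_prod_range_qPoch (-b) hq))
  simp only [neg_mul, sub_neg_eq_add] at hprod
  simp only [(hasSum_finiteTripleTerm ha hb hq _ _).tsum_eq] at hsum
  rw [tendsto_nhds_unique hsum hprod]
  ring

end JacobiTripleProduct

section Dissection

variable {a b q : ℂ}

lemma tsum_int_eq_sum_tsum_mul_add {G : Type*} [NormedAddCommGroup G] [CompleteSpace G] {g : ℤ → G}
    (hg : Summable g) (m : ℕ) [NeZero m] :
    ∑' n, g n = ∑ r : Fin m, ∑' k : ℤ, g (k * m + r) := by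
  let e := (Equiv.prodComm (Fin m) ℤ).trans (Int.divModEquiv m).symm
  calc ∑' n, g n = ∑' p, (g ∘ e) p := (e.tsum_eq g).symm
    _ = ∑ r : Fin m, ∑' k : ℤ, g (k * m + r) := by
      rw [(e.summable_iff.mpr hg).tsum_prod, tsum_fintype]
      rfl

/- The class of `2` is written as the negatives of the class of `1`, so that the symmetry
`thetaTerm_neg` turns its contribution into that of `1` with `a` and `b` exchanged. -/
lemma tsum_int_eq_tsum_three_mul {G : Type*} [NormedAddCommGroup G] [CompleteSpace G] {g : ℤ → G}
    (hg : Summable g) :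
    ∑' n, g n = ∑' k, g (3 * k) + ∑' k, g (3 * k + 1) + ∑' k, g (-(3 * k + 1)) := by
  have hreflect : ∑' k, g (-(3 * k + 1)) = ∑' k, g (3 * k + 2) := by
    rw [← (Equiv.subLeft (-1 : ℤ)).tsum_eq]
    exact tsum_congr fun k ↦ congrArg g (by simp only [Equiv.subLeft_apply]; ring)
  rw [tsum_int_eq_sum_tsum_mul_add hg 3, Fin.sum_univ_three, hreflect]
  simp [mul_comm]

lemma thetaTerm_three_mul (ha : a ≠ 0) (hb : b ≠ 0) (n : ℤ) :
    thetaTerm a b (3 * n) = thetaTerm (a ^ 6 * b ^ 3) (a ^ 3 * b ^ 6) n := by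
  simp only [thetaTerm, ← mul_neg, triangular_three_mul, neg_neg, zpow_add₀ ha, zpow_add₀ hb,
    zpow_mul, mul_zpow]
  norm_cast
  ring

lemma thetaTerm_three_mul_add_one (ha : a ≠ 0) (hb : b ≠ 0) (n : ℤ) :
    thetaTerm a b (3 * n + 1) = a * thetaTerm (a ^ 9 * b ^ 6) (b ^ 3) n := by
  have hpos : triangular (3 * n + 1) = 9 * triangular n + 1 := by
    linarith [two_mul_triangular n, two_mul_triangular (3 * n + 1)]
  have hneg : triangular (-(3 * n + 1)) = 6 * triangular n + 3 * triangular (-n) := by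
    linarith [triangular_neg (3 * n + 1), triangular_neg n]
  simp only [thetaTerm, hpos, hneg, zpow_add₀ hb, zpow_add_one₀ ha, zpow_mul, mul_zpow]
  norm_cast
  ring

lemma ramanujanTheta_three_dissection (ha : a ≠ 0) (hb : b ≠ 0) (hab : ‖a * b‖ < 1) :
    ramanujanTheta a b = ramanujanTheta (a ^ 6 * b ^ 3) (a ^ 3 * b ^ 6) +
      a * ramanujanTheta (a ^ 9 * b ^ 6) (b ^ 3) + b * ramanujanTheta (b ^ 9 * a ^ 6) (a ^ 3) := by
  rw [ramanujanTheta, tsum_int_eq_tsum_three_mul (summable_thetaTerm ha hb hab)]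
  simp only [thetaTerm_neg, thetaTerm_three_mul ha hb, thetaTerm_three_mul_add_one ha hb,
    thetaTerm_three_mul_add_one hb ha, tsum_mul_left, ramanujanTheta]

lemma ramanujanTheta_neg_neg (hq₀ : q ≠ 0) (hq : ‖q‖ < 1) :
    ramanujanTheta (-q) (-q) = E(q) ^ 2 / E(q ^ 2) := by
  rw [jacobi_tripleProduct (neg_ne_zero.mpr hq₀) (neg_ne_zero.mpr hq₀) (by ring)
    (norm_pow_lt_one hq two_ne_zero), neg_neg, eq_div_iff (qPoch_pow_self_ne_zero hq two_ne_zero),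
    ← qPoch_sq_mul_qPoch_sq_self hq]
  ring

lemma ramanujanTheta_one (hq₀ : q ≠ 0) (hq : ‖q‖ < 1) :
    ramanujanTheta q 1 = 2 * (E(q ^ 2) ^ 2 / E(q)) := by
  have hneg_one := qPoch_eq_one_sub_mul_qPoch (-1) hq
  rw [neg_one_mul] at hneg_one
  rw [jacobi_tripleProduct hq₀ one_ne_zero (mul_one q) hq, hneg_one,
    ← qPoch_self_mul_qPoch_neg_self hq]
  field_simp [qPoch_self_ne_zero hq]
  ring

lemma ramanujanTheta_neg_pow_five_neg (hq₀ : q ≠ 0) (hq : ‖q‖ < 1) :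
    ramanujanTheta (-q ^ 5) (-q) = E(q) * E(q ^ 6) ^ 2 / (E(q ^ 2) * E(q ^ 3)) := by
  have hodd : qPoch q (q ^ 2) =
      qPoch q (q ^ 6) * qPoch (q ^ 3) (q ^ 6) * qPoch (q ^ 5) (q ^ 6) := by
    rw [qPoch_eq_prod_qPoch_pow q (norm_pow_lt_one hq two_ne_zero) 3]
    simp only [prod_range_succ, prod_range_zero]
    ring_nf
  have hthree := qPoch_sq_mul_qPoch_sq_self (norm_pow_lt_one hq three_ne_zero)
  rw [← pow_mul] at hthree
  rw [jacobi_tripleProduct (neg_ne_zero.mpr (pow_ne_zero 5 hq₀)) (neg_ne_zero.mpr hq₀) (by ring)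
    (norm_pow_lt_one hq (by norm_num : 6 ≠ 0)), neg_neg, neg_neg, eq_div_iff (mul_ne_zero
    (qPoch_pow_self_ne_zero hq two_ne_zero) (qPoch_pow_self_ne_zero hq three_ne_zero)),
    ← qPoch_sq_mul_qPoch_sq_self hq, hodd, ← hthree]
  ring

lemma ramanujanTheta_sq_self (hq₀ : q ≠ 0) (hq : ‖q‖ < 1) :
    ramanujanTheta (q ^ 2) q = E(q ^ 2) * E(q ^ 3) ^ 2 / (E(q) * E(q ^ 6)) := by
  have hneg : qPoch (-q) q =
      qPoch (-q) (q ^ 3) * qPoch (-q ^ 2) (q ^ 3) * qPoch (-q ^ 3) (q ^ 3) := by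
    rw [qPoch_eq_prod_qPoch_pow (-q) hq 3]
    simp only [prod_range_succ, prod_range_zero]
    ring_nf
  have hthree := qPoch_self_mul_qPoch_neg_self (norm_pow_lt_one hq three_ne_zero)
  rw [← pow_mul] at hthree
  rw [jacobi_tripleProduct (pow_ne_zero 2 hq₀) hq₀ (by ring) (norm_pow_lt_one hq three_ne_zero),
    eq_div_iff (mul_ne_zero (qPoch_self_ne_zero hq) (qPoch_pow_self_ne_zero hq (by norm_num))),
    ← qPoch_self_mul_qPoch_neg_self hq, hneg, ← hthree]
  ring

lemma qPoch_self_sq_div_dissection (hq₀ : q ≠ 0) (hq : ‖q‖ < 1) :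
    E(q) ^ 2 / E(q ^ 2) = E(q ^ 9) ^ 2 / E(q ^ 18) -
      2 * q * (E(q ^ 3) * E(q ^ 18) ^ 2 / (E(q ^ 6) * E(q ^ 9))) := by
  have hnine := ramanujanTheta_neg_neg (pow_ne_zero 9 hq₀)
    (norm_pow_lt_one hq (by norm_num : 9 ≠ 0))
  have hthree := ramanujanTheta_neg_pow_five_neg (pow_ne_zero 3 hq₀)
    (norm_pow_lt_one hq three_ne_zero)
  simp only [← pow_mul, Nat.reduceMul] at hnine hthree
  rw [← ramanujanTheta_neg_neg hq₀ hq, ramanujanTheta_three_dissection (neg_ne_zero.mpr hq₀)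
    (neg_ne_zero.mpr hq₀) (by simpa [← sq] using norm_pow_lt_one hq two_ne_zero),
    show (-q) ^ 6 * (-q) ^ 3 = -q ^ 9 by ring, show (-q) ^ 3 * (-q) ^ 6 = -q ^ 9 by ring,
    show (-q) ^ 9 * (-q) ^ 6 = -q ^ 15 by ring, show (-q) ^ 3 = -q ^ 3 by ring, hnine, hthree]
  ring

lemma qPoch_self_sq_sq_div_dissection (hq₀ : q ≠ 0) (hq : ‖q‖ < 1) :
    E(q ^ 2) ^ 2 / E(q) = E(q ^ 6) * E(q ^ 9) ^ 2 / (E(q ^ 3) * E(q ^ 18)) +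
      q * (E(q ^ 18) ^ 2 / E(q ^ 9)) := by
  have hthree := ramanujanTheta_sq_self (pow_ne_zero 3 hq₀) (norm_pow_lt_one hq three_ne_zero)
  have hnine := ramanujanTheta_one (pow_ne_zero 9 hq₀) (norm_pow_lt_one hq (by norm_num : 9 ≠ 0))
  simp only [← pow_mul, Nat.reduceMul] at hthree hnine
  have hdissect := ramanujanTheta_three_dissection hq₀ one_ne_zero (by simpa using hq)
  simp only [one_pow, mul_one, one_mul, hthree, hnine, ramanujanTheta_one hq₀ hq] at hdissect
  linear_combination hdissect / 2

end Dissection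

section ChanIdentity

variable {q : ℂ}

lemma x_eq_qPoch_self_div (hq : ‖q‖ < 1) :
    x q = E(q) * E(q ^ 6) ^ 3 / (E(q ^ 2) * E(q ^ 3) ^ 3) := by
  have hsix := qPoch_pow_self_ne_zero hq (by norm_num : 6 ≠ 0)
  have htwo := qPoch_pow_self_ne_zero hq two_ne_zero
  have hthree := qPoch_pow_self_ne_zero hq three_ne_zero
  have hodd := qPoch_sq_mul_qPoch_sq_self (norm_pow_lt_one hq three_ne_zero)
  rw [← pow_mul] at hodd
  rw [x, eq_div_of_mul_eq htwo (qPoch_sq_mul_qPoch_sq_self hq), eq_div_of_mul_eq hsix hodd]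
  field_simp

lemma x_ne_zero (hq : ‖q‖ < 1) : x q ≠ 0 :=
  div_ne_zero (qPoch_ne_zero hq (norm_pow_lt_one hq two_ne_zero)) (pow_ne_zero 3
    (qPoch_ne_zero (norm_pow_lt_one hq three_ne_zero) (norm_pow_lt_one hq (by norm_num))))

lemma qPoch_self_mul_qPoch_sq_self_dissection (hq₀ : q ≠ 0) (hq : ‖q‖ < 1) :
    E(q) * E(q ^ 2) =
      E(q ^ 9) * E(q ^ 18) * (1 / x (q ^ 3) - q - 2 * q ^ 2 * x (q ^ 3)) := by
  have hx := x_eq_qPoch_self_div (norm_pow_lt_one hq three_ne_zero)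
  simp only [← pow_mul, Nat.reduceMul] at hx
  have hE {m : ℕ} (hm : m ≠ 0) := qPoch_pow_self_ne_zero hq hm
  have h₁ := qPoch_self_ne_zero hq
  have h₂ := hE two_ne_zero
  have h₃ := hE three_ne_zero
  have h₆ := hE (by norm_num : 6 ≠ 0)
  have h₉ := hE (by norm_num : 9 ≠ 0)
  have h₁₈ := hE (by norm_num : 18 ≠ 0)
  calc E(q) * E(q ^ 2) = E(q) ^ 2 / E(q ^ 2) * (E(q ^ 2) ^ 2 / E(q)) := by field_simp
    _ = _ := by
      rw [qPoch_self_sq_div_dissection hq₀ hq, qPoch_self_sq_sq_div_dissection hq₀ hq, hx]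
      field_simp
      ring

lemma prod_add_rootOfUnity_mul_add {R : Type*} [CommRing R] [IsDomain R] {ω : R}
    (hω : IsPrimitiveRoot ω 3) (a b c : R) :
    ∏ r ∈ range 3, (a + ω ^ r * b + (ω ^ r) ^ 2 * c) = a ^ 3 + b ^ 3 + c ^ 3 - 3 * a * b * c := by
  have hsum := hω.geom_sum_eq_zero (by norm_num)
  simp only [prod_range_succ, sum_range_succ, prod_range_zero, sum_range_zero] at hsum ⊢
  linear_combination (a + b + c) * ((a * b + a * c + b * c) * hsum +
    (b ^ 2 + (ω ^ 3 + 1) * c ^ 2 + ω * a * c + (ω + ω ^ 2) * b * c) * hω.pow_eq_one)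

lemma qPoch_cube_pow_four_mul_eq (hq₀ : q ≠ 0) (hq : ‖q‖ < 1) :
    E(q ^ 3) ^ 4 * E(q ^ 6) ^ 4 = (E(q ^ 9) * E(q ^ 18)) ^ 4 *
      (1 / x (q ^ 3) ^ 3 - 7 * q ^ 3 - 8 * q ^ 6 * x (q ^ 3) ^ 3) := by
  obtain ⟨ω, hω⟩ : ∃ ω : ℂ, IsPrimitiveRoot ω 3 := ⟨_, Complex.isPrimitiveRoot_exp 3 three_ne_zero⟩
  have hω' : IsPrimitiveRoot (ω ^ 2) 3 := hω.pow_of_coprime 2 (by norm_num)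
  have hdissect (r : ℕ) : E(ω ^ r * q) * E((ω ^ 2) ^ r * q ^ 2) = E(q ^ 9) * E(q ^ 18) *
      (1 / x (q ^ 3) + ω ^ r * -q + (ω ^ r) ^ 2 * (-2 * q ^ 2 * x (q ^ 3))) := by
    have hω₃ : (ω ^ r) ^ 3 = 1 := by rw [pow_right_comm, hω.pow_eq_one, one_pow]
    have hnorm : ‖ω ^ r * q‖ < 1 := by simpa [hω.norm'_eq_one three_ne_zero] using hq
    have h := qPoch_self_mul_qPoch_sq_self_dissection
      (mul_ne_zero (pow_ne_zero r (hω.ne_zero three_ne_zero)) hq₀) hnorm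
    have hinv (k : ℕ) : (ω ^ r * q) ^ (3 * k) = q ^ (3 * k) := by
      rw [pow_mul, mul_pow, hω₃, one_mul, ← pow_mul]
    rw [hinv 1, hinv 3, hinv 6, mul_pow, pow_right_comm] at h
    rw [h, pow_right_comm]
    ring
  have hnorm₁ := prod_qPoch_self_rootOfUnity_mul Nat.prime_three hω hq
  have hnorm₂ :=
    prod_qPoch_self_rootOfUnity_mul Nat.prime_three hω' (norm_pow_lt_one hq two_ne_zero)
  simp only [← pow_mul, Nat.reduceMul, Nat.reducePow, Nat.reduceAdd] at hnorm₁ hnorm₂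
  have hx := x_ne_zero (norm_pow_lt_one hq three_ne_zero)
  calc E(q ^ 3) ^ 4 * E(q ^ 6) ^ 4
      = (∏ r ∈ range 3, E(ω ^ r * q) * E((ω ^ 2) ^ r * q ^ 2)) * (E(q ^ 9) * E(q ^ 18)) := by
        rw [← hnorm₁, ← hnorm₂, prod_mul_distrib]
        simp only [← pow_mul]
        ring
    _ = (E(q ^ 9) * E(q ^ 18)) ^ 4 *
          (1 / x (q ^ 3) ^ 3 - 7 * q ^ 3 - 8 * q ^ 6 * x (q ^ 3) ^ 3) := by
        rw [prod_congr rfl fun r _ ↦ hdissect r, prod_mul_distrib, prod_const, card_range,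
          prod_add_rootOfUnity_mul_add hω]
        field_simp
        ring

end ChanIdentity

theorem chan_identity (q : ℂ) (hq0 : 0 < ‖q‖) (hq1 : ‖q‖ < 1) :
    1 / (qPoch q q * qPoch (q ^ 2) (q ^ 2)) =
      qPoch (q ^ 9) (q ^ 9) ^ 3 * qPoch (q ^ 18) (q ^ 18) ^ 3 /
          (qPoch (q ^ 3) (q ^ 3) ^ 4 * qPoch (q ^ 6) (q ^ 6) ^ 4) *
        ((1 / x (q ^ 3) ^ 2 - 2 * q ^ 3 * x (q ^ 3)) +
          q * (1 / x (q ^ 3) + 4 * q ^ 3 * x (q ^ 3) ^ 2) + 3 * q ^ 2) := by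
  have hq₀ := norm_pos_iff.mp hq0
  have hx := x_ne_zero (norm_pow_lt_one hq1 three_ne_zero)
  have hE {m : ℕ} (hm : m ≠ 0) := qPoch_pow_self_ne_zero hq1 hm
  have hE₁₂ : E(q) * E(q ^ 2) ≠ 0 := mul_ne_zero (qPoch_self_ne_zero hq1) (hE two_ne_zero)
  have hE₃₆ : E(q ^ 3) ^ 4 * E(q ^ 6) ^ 4 ≠ 0 :=
    mul_ne_zero (pow_ne_zero 4 (hE three_ne_zero)) (pow_ne_zero 4 (hE (by norm_num)))
  -- `u³ + v³ + w³ - 3uvw` is divisible by `u + v + w`.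
  have hfactor : 1 / x (q ^ 3) ^ 3 - 7 * q ^ 3 - 8 * q ^ 6 * x (q ^ 3) ^ 3 =
      (1 / x (q ^ 3) - q - 2 * q ^ 2 * x (q ^ 3)) *
        ((1 / x (q ^ 3) ^ 2 - 2 * q ^ 3 * x (q ^ 3)) +
          q * (1 / x (q ^ 3) + 4 * q ^ 3 * x (q ^ 3) ^ 2) + 3 * q ^ 2) := by
    field_simp
    ring
  rw [div_mul_eq_mul_div, div_eq_div_iff hE₁₂ hE₃₆, qPoch_cube_pow_four_mul_eq hq₀ hq1,
    qPoch_self_mul_qPoch_sq_self_dissection hq₀ hq1, hfactor]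
  ring
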